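/- arXiv:math/0310273 — 2 statements merged into one kernel-verified Lean document; each statement's English description precedes it below -/
import Mathlib

section
/- Fix a real number t with 0 < t < 1. There exists a constant K(t) > 0, depending only on t, such that for every admissible labeling (a,b,e;c,d,f) of the edges of a tetrahedron with column sums C_1 ≥ C_2 ≥ C_3, the unitary 6j-symbol satisfies |{a,b,e;c,d,f}_u| ≤ K(t)·t^{(C_1−C_2)(C_1−C_3)/2 + C_1}. In fact one may take K(t) = (1−q)/((q;q)_∞)^9. -/
open Filter Finset

/-- A triple of nonnegative integers is admissible if its sum is even and
it satisfies every triangle inequality. -/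
def Admissible (a b c : ℕ) : Prop :=
  Even (a + b + c) ∧ a ≤ b + c ∧ b ≤ a + c ∧ c ≤ a + b

/-- A labeling (a,b,e;c,d,f) of the edges of a tetrahedron is admissible if the
four vertex triples (a,d,e), (b,c,e), (a,b,f), (c,d,f) are admissible. -/
def TetAdmissible (a b e c d f : ℕ) : Prop :=
  Admissible a d e ∧ Admissible b c e ∧ Admissible a b f ∧ Admissible c d f

/-- The quantized integer `[n] = (t^{2n} - t^{-2n})/(t^2 - t^{-2})`. -/
noncomputable def qint (t : ℝ) (n : ℕ) : ℝ :=
  (t ^ (2 * n) - (t ^ (2 * n))⁻¹) / (t ^ 2 - (t ^ 2)⁻¹)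

/-- The quantized factorial `[n]! = [n]·[n-1]!`, `[0]! = 1`. -/
noncomputable def qfact (t : ℝ) : ℕ → ℝ
  | 0 => 1
  | n + 1 => qint t (n + 1) * qfact t n

/-- `θ(a,b,c)` for an admissible triple. -/
noncomputable def qtheta (t : ℝ) (a b c : ℕ) : ℝ :=
  (-1 : ℝ) ^ ((a + b + c) / 2) *
    (qfact t ((a + b + c) / 2 + 1) * qfact t ((a + b - c) / 2) *
      qfact t ((a + c - b) / 2) * qfact t ((b + c - a) / 2)) /
    (qfact t a * qfact t b * qfact t c)

/-- Product of the quantized factorials of the strand numbers of a triple. -/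
noncomputable def strandProd (t : ℝ) (a b c : ℕ) : ℝ :=
  qfact t ((a + b - c) / 2) * qfact t ((b + c - a) / 2) * qfact t ((a + c - b) / 2)

/-- The tetrahedral coefficient `Tet(a,b,e;c,d,f)`. -/
noncomputable def Tet (t : ℝ) (a b e c d f : ℕ) : ℝ :=
  (strandProd t a d e * strandProd t b c e * strandProd t a b f * strandProd t c d f) /
      (qfact t a * qfact t b * qfact t c * qfact t d * qfact t e * qfact t f) *
    ∑ s ∈ Finset.Icc
        (max ((a + d + e) / 2) (max ((b + c + e) / 2) (max ((a + b + f) / 2) ((c + d + f) / 2))))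
        (min ((a + b + c + d) / 2) (min ((a + c + e + f) / 2) ((b + d + e + f) / 2))),
      ((-1 : ℝ) ^ s * qfact t (s + 1)) /
        (qfact t ((a + b + c + d) / 2 - s) * qfact t ((a + c + e + f) / 2 - s) *
          qfact t ((b + d + e + f) / 2 - s) *
          qfact t (s - (a + d + e) / 2) * qfact t (s - (b + c + e) / 2) *
          qfact t (s - (a + b + f) / 2) * qfact t (s - (c + d + f) / 2))

/-- The unitary 6j-symbol `{a,b,e;c,d,f}_u`. -/
noncomputable def sixj (t : ℝ) (a b e c d f : ℕ) : ℝ :=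
  Tet t a b e c d f /
    Real.sqrt (qtheta t a d e * qtheta t b c e * qtheta t a b f * qtheta t c d f)

/-- The q-Pochhammer symbol `(x;q)_n`. -/
noncomputable def qPoch (x q : ℝ) (n : ℕ) : ℝ := ∏ i ∈ Finset.range n, (1 - x * q ^ i)

/-- The infinite q-Pochhammer symbol `(x;q)_∞`. -/
noncomputable def qPochInf (x q : ℝ) : ℝ := ∏' i : ℕ, (1 - x * q ^ i)

/-!
Write `[n]! = t^{-n(n-1)} (1-q)^{-n} (q;q)_n`, where `(q;q)_∞ ≤ (q;q)_n ≤ 1`. If every factorial in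
the `s`-th summand of the unitary 6j-symbol is replaced by its leading factor
`t^{-n(n-1)} (1-q)^{-n}`, the modulus of the summand becomes exactly `(1-q) t^{E(s)}` with
`E(s) = 2 (u_1 u_2 + u_1 u_3 + u_2 u_3) + u_1 + u_2 + u_3 + s`, `u_i = B_i - s`. The replacement
costs `(q;q)_∞^{-7}` for the factorials in the denominator of the summand, `(q;q)_∞^{-2}` for the
four `[A_j + 1]!` under the square root, and gains `1-q` from `[s+1]!`. Since
`E(M-k) ≥ E(M) + 4k`, a geometric series in `q` bounds the sum by its term at `s = M = min B_i`,
where `E(M) = (C_1-C_2)(C_1-C_3)/2 + C_1`.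
-/

section QPochhammer

variable {x q : ℝ}

theorem qPoch_succ (x q : ℝ) (n : ℕ) : qPoch x q (n + 1) = qPoch x q n * (1 - x * q ^ n) :=
  prod_range_succ _ n

theorem one_sub_mul_pow_pos (hx0 : 0 ≤ x) (hx1 : x < 1) (hq0 : 0 ≤ q) (hq1 : q ≤ 1) (n : ℕ) :
    0 < 1 - x * q ^ n :=
  sub_pos.2 ((mul_le_of_le_one_right hx0 (pow_le_one₀ hq0 hq1)).trans_lt hx1)

theorem qPoch_pos (hx0 : 0 ≤ x) (hx1 : x < 1) (hq0 : 0 ≤ q) (hq1 : q ≤ 1) (n : ℕ) :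
    0 < qPoch x q n :=
  prod_pos fun i _ => one_sub_mul_pow_pos hx0 hx1 hq0 hq1 i

theorem qPoch_antitone (hx0 : 0 ≤ x) (hx1 : x < 1) (hq0 : 0 ≤ q) (hq1 : q ≤ 1) :
    Antitone (qPoch x q) := by
  refine antitone_nat_of_succ_le fun n => ?_
  rw [qPoch_succ]
  exact mul_le_of_le_one_right (qPoch_pos hx0 hx1 hq0 hq1 n).le (sub_le_self _ (by positivity))

theorem qPoch_le_one (hx0 : 0 ≤ x) (hx1 : x < 1) (hq0 : 0 ≤ q) (hq1 : q ≤ 1) (n : ℕ) :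
    qPoch x q n ≤ 1 := by
  simpa [qPoch] using qPoch_antitone hx0 hx1 hq0 hq1 n.zero_le

theorem qPoch_succ_le_one_sub (hx0 : 0 ≤ x) (hx1 : x < 1) (hq0 : 0 ≤ q) (hq1 : q ≤ 1) (n : ℕ) :
    qPoch x q (n + 1) ≤ 1 - x := by
  simpa [qPoch] using qPoch_antitone hx0 hx1 hq0 hq1 (Nat.le_add_left 1 n)

theorem summable_neg_mul_pow (x : ℝ) (hq0 : 0 ≤ q) (hq1 : q < 1) :
    Summable fun i : ℕ => -(x * q ^ i) :=
  ((summable_geometric_of_lt_one hq0 hq1).mul_left x).neg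

theorem qPochInf_pos (hx0 : 0 ≤ x) (hx1 : x < 1) (hq0 : 0 ≤ q) (hq1 : q < 1) :
    0 < qPochInf x q := by
  have hlog := Real.summable_log_one_add_of_summable (summable_neg_mul_pow x hq0 hq1)
  simp only [← sub_eq_add_neg] at hlog
  rw [qPochInf, ← Real.rexp_tsum_eq_tprod (one_sub_mul_pow_pos hx0 hx1 hq0 hq1.le) hlog]
  exact Real.exp_pos _

theorem qPochInf_le_qPoch (hx0 : 0 ≤ x) (hx1 : x < 1) (hq0 : 0 ≤ q) (hq1 : q < 1) (n : ℕ) :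
    qPochInf x q ≤ qPoch x q n := by
  have hmul := Real.multipliable_one_add_of_summable (summable_neg_mul_pow x hq0 hq1)
  simp only [← sub_eq_add_neg] at hmul
  exact (qPoch_antitone hx0 hx1 hq0 hq1.le).le_of_tendsto hmul.hasProd.tendsto_prod_nat n

end QPochhammer

theorem sum_Icc_pow_sub_le {q : ℝ} (hq0 : 0 ≤ q) (hq1 : q < 1) (m M : ℕ) :
    ∑ s ∈ Icc m M, q ^ (M - s) ≤ (1 - q)⁻¹ := by
  have hsub : Icc m M ⊆ range (M + 1) := fun s hs => by grind
  calc ∑ s ∈ Icc m M, q ^ (M - s)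
      ≤ ∑ s ∈ range (M + 1), q ^ (M - s) :=
        sum_le_sum_of_subset_of_nonneg hsub fun _ _ _ => by positivity
    _ = ∑ s ∈ range (M + 1), q ^ s := sum_flip fun k => q ^ k
    _ ≤ ∑' s, q ^ s :=
        (summable_geometric_of_lt_one hq0 hq1).sum_le_tsum _ fun _ _ => by positivity
    _ = (1 - q)⁻¹ := tsum_geometric_of_lt_one hq0 hq1

/-- The factor `t^{-n(n-1)} (1-q)^{-n}` by which `[n]!` differs from `(q;q)_n`, where `q = t^4`. -/
noncomputable def qfactLead (t : ℝ) (n : ℕ) : ℝ :=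
  (t ^ (n * (n - 1)) * (1 - t ^ 4) ^ n)⁻¹

section QuantumFactorial

variable {t : ℝ}

theorem qint_succ (ht0 : 0 < t) (ht1 : t < 1) (n : ℕ) :
    qint t (n + 1) = (1 - t ^ 4 * (t ^ 4) ^ n) / (t ^ (2 * n) * (1 - t ^ 4)) := by
  have hq : 1 - t ^ 4 ≠ 0 := (sub_pos.2 (pow_lt_one₀ ht0.le ht1 four_ne_zero)).ne'
  have hden : t ^ 2 - (t ^ 2)⁻¹ = -(1 - t ^ 4) / t ^ 2 := by field_simp; ring
  rw [qint, hden]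
  field_simp
  ring

theorem qfactLead_succ (t : ℝ) (n : ℕ) :
    qfactLead t (n + 1) = qfactLead t n / (t ^ (2 * n) * (1 - t ^ 4)) := by
  have hexp : (n + 1) * (n + 1 - 1) = n * (n - 1) + 2 * n := by
    cases n with
    | zero => rfl
    | succ k => simp only [Nat.add_sub_cancel]; ring
  rw [qfactLead, qfactLead, hexp, pow_add, pow_succ, div_eq_mul_inv, ← mul_inv]
  congr 1
  ring

theorem qfact_eq_qfactLead_mul_qPoch (ht0 : 0 < t) (ht1 : t < 1) (n : ℕ) :
    qfact t n = qfactLead t n * qPoch (t ^ 4) (t ^ 4) n := by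
  induction n with
  | zero => simp [qfact, qfactLead, qPoch]
  | succ n ih =>
    rw [qfact, ih, qint_succ ht0 ht1, qfactLead_succ, qPoch_succ]
    ring

theorem qfactLead_pos (ht0 : 0 < t) (ht1 : t < 1) (n : ℕ) : 0 < qfactLead t n := by
  have := sub_pos.2 (pow_lt_one₀ ht0.le ht1 four_ne_zero)
  rw [qfactLead]
  positivity

theorem qfactLead_eq_exp (ht0 : 0 < t) (ht1 : t < 1) (n : ℕ) :
    qfactLead t n = Real.exp (-(n * (n - 1) * Real.log t + n * Real.log (1 - t ^ 4))) := by
  have hq : 0 < 1 - t ^ 4 := sub_pos.2 (pow_lt_one₀ ht0.le ht1 four_ne_zero)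
  have hcast : ((n * (n - 1) : ℕ) : ℝ) = n * (n - 1) := by cases n <;> simp
  rw [Real.exp_neg, Real.exp_add, ← hcast, Real.exp_nat_mul, Real.exp_nat_mul, Real.exp_log ht0,
    Real.exp_log hq, qfactLead]

theorem qfact_pos (ht0 : 0 < t) (ht1 : t < 1) (n : ℕ) : 0 < qfact t n := by
  have hq0 := pow_pos ht0 4
  have hq1 := pow_lt_one₀ ht0.le ht1 four_ne_zero
  rw [qfact_eq_qfactLead_mul_qPoch ht0 ht1]
  exact mul_pos (qfactLead_pos ht0 ht1 n) (qPoch_pos hq0.le hq1 hq0.le hq1.le n)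

theorem qfact_le_qfactLead (ht0 : 0 < t) (ht1 : t < 1) (n : ℕ) : qfact t n ≤ qfactLead t n := by
  have hq0 := pow_pos ht0 4
  have hq1 := pow_lt_one₀ ht0.le ht1 four_ne_zero
  rw [qfact_eq_qfactLead_mul_qPoch ht0 ht1]
  exact mul_le_of_le_one_right (qfactLead_pos ht0 ht1 n).le
    (qPoch_le_one hq0.le hq1 hq0.le hq1.le n)

theorem qfact_succ_le (ht0 : 0 < t) (ht1 : t < 1) (n : ℕ) :
    qfact t (n + 1) ≤ (1 - t ^ 4) * qfactLead t (n + 1) := by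
  have hq0 := pow_pos ht0 4
  have hq1 := pow_lt_one₀ ht0.le ht1 four_ne_zero
  rw [qfact_eq_qfactLead_mul_qPoch ht0 ht1, mul_comm]
  exact mul_le_mul_of_nonneg_right (qPoch_succ_le_one_sub hq0.le hq1 hq0.le hq1.le n)
    (qfactLead_pos ht0 ht1 _).le

theorem qPochInf_mul_qfactLead_le (ht0 : 0 < t) (ht1 : t < 1) (n : ℕ) :
    qPochInf (t ^ 4) (t ^ 4) * qfactLead t n ≤ qfact t n := by
  have hq0 := pow_pos ht0 4
  have hq1 := pow_lt_one₀ ht0.le ht1 four_ne_zero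
  rw [qfact_eq_qfactLead_mul_qPoch ht0 ht1, mul_comm]
  exact mul_le_mul_of_nonneg_left (qPochInf_le_qPoch hq0.le hq1 hq0.le hq1 n)
    (qfactLead_pos ht0 ht1 n).le

end QuantumFactorial

/-- The modulus of the summand of index `s` of the unitary 6j-symbol with half sums `A_j` around
the vertices and `B_i` around the quadrilaterals, the quantized factorial being replaced by an
arbitrary sequence `g` so that it can be compared with `qfactLead`. -/
noncomputable def racahTerm (g : ℕ → ℝ) (A : Fin 4 → ℕ) (B : Fin 3 → ℕ) (s : ℕ) : ℝ :=
  √(∏ j, (∏ i, g (B i - A j)) / g (A j + 1)) *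
    (g (s + 1) / ((∏ i, g (B i - s)) * ∏ j, g (s - A j)))

theorem sqrt_prod_div_le_mul {f g : ℕ → ℝ} {c : ℝ} (hc : 0 < c) (hg : ∀ n, 0 < g n)
    (hlower : ∀ n, c * g n ≤ f n) (hupper : ∀ n, f n ≤ g n) (A : Fin 4 → ℕ) (B : Fin 3 → ℕ) :
    √(∏ j, (∏ i, f (B i - A j)) / f (A j + 1)) ≤
      (c ^ 2)⁻¹ * √(∏ j, (∏ i, g (B i - A j)) / g (A j + 1)) := by
  have hf n : 0 < f n := (mul_pos hc (hg n)).trans_le (hlower n)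
  rw [← Real.sqrt_sq (show 0 ≤ (c ^ 2)⁻¹ by positivity), ← Real.sqrt_mul (by positivity)]
  refine Real.sqrt_le_sqrt ?_
  calc ∏ j, (∏ i, f (B i - A j)) / f (A j + 1)
      ≤ ∏ j, (∏ i, g (B i - A j)) / (c * g (A j + 1)) := by
        gcongr with j _ i
        · exact fun j _ => div_nonneg (prod_nonneg fun i _ => (hf _).le) (hf _).le
        · exact prod_nonneg fun i _ => (hg _).le
        · exact mul_pos hc (hg _)
        · exact fun i _ => (hf _).le
        · exact hupper _
        · exact hlower _
    _ = (c ^ 2)⁻¹ ^ 2 * ∏ j, (∏ i, g (B i - A j)) / g (A j + 1) := by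
        simp only [div_mul_eq_div_div_swap _ c, prod_div_distrib, prod_const, card_univ,
          Fintype.card_fin]
        field_simp

theorem div_prod_mul_prod_le_mul {f g : ℕ → ℝ} {c w : ℝ} (hc : 0 < c) (hg : ∀ n, 0 < g n)
    (hlower : ∀ n, c * g n ≤ f n) (hsucc : ∀ n, f (n + 1) ≤ w * g (n + 1))
    (A : Fin 4 → ℕ) (B : Fin 3 → ℕ) (s : ℕ) :
    f (s + 1) / ((∏ i, f (B i - s)) * ∏ j, f (s - A j)) ≤
      w / c ^ 7 * (g (s + 1) / ((∏ i, g (B i - s)) * ∏ j, g (s - A j))) := by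
  have hcg n : 0 < c * g n := mul_pos hc (hg n)
  have hf n : 0 < f n := (hcg n).trans_le (hlower n)
  calc f (s + 1) / ((∏ i, f (B i - s)) * ∏ j, f (s - A j))
      ≤ w * g (s + 1) / ((∏ i, c * g (B i - s)) * ∏ j, c * g (s - A j)) := by
        gcongr
        · exact (hf _).le.trans (hsucc s)
        · exact mul_pos (prod_pos fun i _ => hcg _) (prod_pos fun j _ => hcg _)
        · exact hsucc s
        · exact prod_nonneg fun j _ => (hcg _).le
        · exact prod_nonneg fun i _ => (hf _).le
        · exact fun i _ => (hcg _).le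
        · exact hlower _
        · exact fun j _ => (hcg _).le
        · exact hlower _
    _ = w / c ^ 7 * (g (s + 1) / ((∏ i, g (B i - s)) * ∏ j, g (s - A j))) := by
        simp only [prod_mul_distrib, prod_const, card_univ, Fintype.card_fin]
        field_simp

theorem racahTerm_le_mul {f g : ℕ → ℝ} {c w : ℝ} (hc : 0 < c) (hg : ∀ n, 0 < g n)
    (hlower : ∀ n, c * g n ≤ f n) (hupper : ∀ n, f n ≤ g n)
    (hsucc : ∀ n, f (n + 1) ≤ w * g (n + 1)) (A : Fin 4 → ℕ) (B : Fin 3 → ℕ) (s : ℕ) :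
    racahTerm f A B s ≤ w / c ^ 9 * racahTerm g A B s := by
  have hf n : 0 < f n := (mul_pos hc (hg n)).trans_le (hlower n)
  have hnonneg : 0 ≤ f (s + 1) / ((∏ i, f (B i - s)) * ∏ j, f (s - A j)) :=
    div_nonneg (hf _).le (mul_nonneg (prod_nonneg fun _ _ => (hf _).le)
      (prod_nonneg fun _ _ => (hf _).le))
  calc racahTerm f A B s
      ≤ (c ^ 2)⁻¹ * √(∏ j, (∏ i, g (B i - A j)) / g (A j + 1)) *
        (w / c ^ 7 * (g (s + 1) / ((∏ i, g (B i - s)) * ∏ j, g (s - A j)))) :=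
        mul_le_mul (sqrt_prod_div_le_mul hc hg hlower hupper A B)
          (div_prod_mul_prod_le_mul hc hg hlower hsucc A B s) hnonneg (by positivity)
    _ = w / c ^ 9 * racahTerm g A B s := by
        rw [racahTerm]
        field_simp

theorem racahTerm_exp (e : ℕ → ℝ) (A : Fin 4 → ℕ) (B : Fin 3 → ℕ) (s : ℕ) :
    racahTerm (fun n => Real.exp (e n)) A B s =
      Real.exp ((∑ j, (∑ i, e (B i - A j) - e (A j + 1))) / 2 +
        (e (s + 1) - (∑ i, e (B i - s) + ∑ j, e (s - A j)))) := by
  simp only [racahTerm, Real.exp_add, Real.exp_sub, Real.exp_half, Real.exp_sum]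

/-- The order in `t` of the summand of index `s` of the unitary 6j-symbol: in terms of
`u_i = B_i - s` it is `2 (u_0 u_1 + u_0 u_2 + u_1 u_2) + u_0 + u_1 + u_2 + s`. -/
def racahOrder (B : Fin 3 → ℕ) (s : ℕ) : ℕ :=
  2 * ((B 0 - s) * (B 1 - s) + (B 0 - s) * (B 2 - s) + (B 1 - s) * (B 2 - s)) +
    ∑ i, (B i - s) + s

theorem racahOrder_add_le {B : Fin 3 → ℕ} {s M : ℕ} (hs : s ≤ M) (hM : ∀ i, M ≤ B i) :
    racahOrder B M + 4 * (M - s) ≤ racahOrder B s := by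
  obtain ⟨k, rfl⟩ := Nat.exists_eq_add_of_le hs
  obtain ⟨u, hu⟩ : ∃ u : Fin 3 → ℕ, ∀ i, B i = s + k + u i :=
    ⟨fun i => B i - (s + k), fun i => by grind⟩
  have hM' i : B i - (s + k) = u i := by grind
  have hs' i : B i - s = u i + k := by grind
  simp only [racahOrder, hM', hs', Fin.sum_univ_three, Nat.add_sub_cancel_left]
  nlinarith [Nat.le_mul_self k]

theorem racahTerm_qfactLead {t : ℝ} (ht0 : 0 < t) (ht1 : t < 1) {A : Fin 4 → ℕ} {B : Fin 3 → ℕ}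
    {s : ℕ} (hAB : ∑ j, A j = ∑ i, B i) (hA : ∀ j, A j ≤ s) (hB : ∀ i, s ≤ B i) :
    racahTerm (qfactLead t) A B s = (1 - t ^ 4) * t ^ racahOrder B s := by
  have hq : 0 < 1 - t ^ 4 := sub_pos.2 (pow_lt_one₀ ht0.le ht1 four_ne_zero)
  have hAB' : (A 0 : ℝ) = B 0 + B 1 + B 2 - A 1 - A 2 - A 3 := by
    simp only [Fin.sum_univ_four, Fin.sum_univ_three] at hAB
    rify at hAB
    linarith
  rw [funext (qfactLead_eq_exp ht0 ht1), racahTerm_exp]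
  have horder : t ^ racahOrder B s = Real.exp (racahOrder B s * Real.log t) := by
    rw [Real.exp_nat_mul, Real.exp_log ht0]
  rw [horder, ← Real.exp_log hq, ← Real.exp_add, Real.log_exp]
  congr 1
  simp only [racahOrder, Fin.sum_univ_four, Fin.sum_univ_three]
  push_cast [Nat.cast_sub (hA _), Nat.cast_sub (hB _), Nat.cast_sub ((hA _).trans (hB _))]
  rw [hAB']
  ring

theorem racahTerm_qfact_le {t : ℝ} (ht0 : 0 < t) (ht1 : t < 1) {A : Fin 4 → ℕ} {B : Fin 3 → ℕ}
    {s : ℕ} (hAB : ∑ j, A j = ∑ i, B i) (hA : ∀ j, A j ≤ s) (hB : ∀ i, s ≤ B i) :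
    racahTerm (qfact t) A B s ≤
      (1 - t ^ 4) ^ 2 / qPochInf (t ^ 4) (t ^ 4) ^ 9 * t ^ racahOrder B s := by
  have hq0 := pow_pos ht0 4
  have hq1 := pow_lt_one₀ ht0.le ht1 four_ne_zero
  refine (racahTerm_le_mul (qPochInf_pos hq0.le hq1 hq0.le hq1) (qfactLead_pos ht0 ht1)
    (qPochInf_mul_qfactLead_le ht0 ht1) (qfact_le_qfactLead ht0 ht1) (qfact_succ_le ht0 ht1)
    A B s).trans_eq ?_
  rw [racahTerm_qfactLead ht0 ht1 hAB hA hB]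
  ring

theorem sum_racahTerm_qfact_le {t : ℝ} (ht0 : 0 < t) (ht1 : t < 1) {A : Fin 4 → ℕ}
    {B : Fin 3 → ℕ} {m M : ℕ} (hAB : ∑ j, A j = ∑ i, B i) (hA : ∀ j, A j ≤ m)
    (hB : ∀ i, M ≤ B i) :
    ∑ s ∈ Icc m M, racahTerm (qfact t) A B s ≤
      (1 - t ^ 4) / qPochInf (t ^ 4) (t ^ 4) ^ 9 * t ^ racahOrder B M := by
  have hq0 := pow_pos ht0 4
  have hq1 := pow_lt_one₀ ht0.le ht1 four_ne_zero
  have := sub_pos.2 hq1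
  have hinf := qPochInf_pos hq0.le hq1 hq0.le hq1
  set K := (1 - t ^ 4) ^ 2 / qPochInf (t ^ 4) (t ^ 4) ^ 9 with hK
  calc ∑ s ∈ Icc m M, racahTerm (qfact t) A B s
      ≤ ∑ s ∈ Icc m M, K * t ^ racahOrder B M * (t ^ 4) ^ (M - s) := by
        refine sum_le_sum fun s hs => ?_
        obtain ⟨hms, hsM⟩ := mem_Icc.1 hs
        refine (racahTerm_qfact_le ht0 ht1 hAB (fun j => (hA j).trans hms)
          fun i => hsM.trans (hB i)).trans ?_
        rw [mul_assoc, ← pow_mul, ← pow_add]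
        gcongr ?_ * ?_
        exact pow_le_pow_of_le_one ht0.le ht1.le (racahOrder_add_le hsM hB)
    _ = K * t ^ racahOrder B M * ∑ s ∈ Icc m M, (t ^ 4) ^ (M - s) := (mul_sum ..).symm
    _ ≤ K * t ^ racahOrder B M * (1 - t ^ 4)⁻¹ := by
        gcongr
        exact sum_Icc_pow_sub_le hq0.le hq1 m M
    _ = (1 - t ^ 4) / qPochInf (t ^ 4) (t ^ 4) ^ 9 * t ^ racahOrder B M := by
        rw [hK]
        field_simp

section Tetrahedron

variable {t : ℝ} {a b e c d f : ℕ}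

/-- The half sums `A_1, …, A_4` of the labels around the four vertices. -/
def vertexHalfSum (a b e c d f : ℕ) : Fin 4 → ℕ :=
  ![(a + d + e) / 2, (b + c + e) / 2, (a + b + f) / 2, (c + d + f) / 2]

/-- The half sums `B_1, B_2, B_3` of the labels around the three quadrilaterals, that is, of two
of the three pairs of opposite edges. -/
def quadHalfSum (a b e c d f : ℕ) : Fin 3 → ℕ :=
  ![(a + b + c + d) / 2, (a + c + e + f) / 2, (b + d + e + f) / 2]

/-- The product of the quantized factorials of the strand numbers of all four vertices. -/
noncomputable def vertexStrandProd (t : ℝ) (a b e c d f : ℕ) : ℝ :=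
  strandProd t a d e * strandProd t b c e * strandProd t a b f * strandProd t c d f

/-- The product of the quantized factorials of the six edge labels. -/
noncomputable def edgeProd (t : ℝ) (a b e c d f : ℕ) : ℝ :=
  qfact t a * qfact t b * qfact t c * qfact t d * qfact t e * qfact t f

/-- The product `θ(a,d,e) θ(b,c,e) θ(a,b,f) θ(c,d,f)` over the four vertices. -/
noncomputable def thetaProd (t : ℝ) (a b e c d f : ℕ) : ℝ :=
  qtheta t a d e * qtheta t b c e * qtheta t a b f * qtheta t c d f

/-- The modulus of the unitary 6j-symbol. The product of the four `θ`s has sign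
`(-1)^(a+b+c+d+e+f)`; where it is negative the symbol is imaginary, so the modulus is not `|sixj|`,
whose real square root then has the junk value `0`. -/
noncomputable def sixjModulus (t : ℝ) (a b e c d f : ℕ) : ℝ :=
  |Tet t a b e c d f| / √|thetaProd t a b e c d f|

theorem abs_sixj_le_sixjModulus (t : ℝ) (a b e c d f : ℕ) :
    |sixj t a b e c d f| ≤ sixjModulus t a b e c d f := by
  rw [sixj, abs_div, sixjModulus]
  change _ / |√(thetaProd t a b e c d f)| ≤ _
  rcases le_total 0 (thetaProd t a b e c d f) with h | h
  · rw [abs_of_nonneg (Real.sqrt_nonneg _), abs_of_nonneg h]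
  · rw [Real.sqrt_eq_zero_of_nonpos h, abs_zero, div_zero]
    positivity

theorem TetAdmissible.sum_vertexHalfSum (h : TetAdmissible a b e c d f) :
    ∑ j, vertexHalfSum a b e c d f j = ∑ i, quadHalfSum a b e c d f i := by
  obtain ⟨-, ⟨h₂, -⟩, ⟨h₃, -⟩, ⟨h₄, -⟩⟩ := h
  simp only [vertexHalfSum, quadHalfSum, Fin.sum_univ_four, Fin.sum_univ_three, Matrix.cons_val]
  grind

theorem TetAdmissible.vertexStrandProd_eq (h : TetAdmissible a b e c d f) (t : ℝ) :
    vertexStrandProd t a b e c d f =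
      ∏ j, ∏ i, qfact t (quadHalfSum a b e c d f i - vertexHalfSum a b e c d f j) := by
  obtain ⟨⟨⟨A₁, h₁⟩, -⟩, ⟨⟨A₂, h₂⟩, -⟩, ⟨⟨A₃, h₃⟩, -⟩, -⟩ := h
  have hade : (a + d - e) / 2 = (a + b + c + d) / 2 - (b + c + e) / 2 := by lia
  have hdea : (d + e - a) / 2 = (b + d + e + f) / 2 - (a + b + f) / 2 := by lia
  have haed : (a + e - d) / 2 = (a + c + e + f) / 2 - (c + d + f) / 2 := by lia
  have hbce : (b + c - e) / 2 = (a + b + c + d) / 2 - (a + d + e) / 2 := by lia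
  have hceb : (c + e - b) / 2 = (a + c + e + f) / 2 - (a + b + f) / 2 := by lia
  have hbec : (b + e - c) / 2 = (b + d + e + f) / 2 - (c + d + f) / 2 := by lia
  have habf : (a + b - f) / 2 = (a + b + c + d) / 2 - (c + d + f) / 2 := by lia
  have hbfa : (b + f - a) / 2 = (b + d + e + f) / 2 - (a + d + e) / 2 := by lia
  have hafb : (a + f - b) / 2 = (a + c + e + f) / 2 - (b + c + e) / 2 := by lia
  have hcdf : (c + d - f) / 2 = (a + b + c + d) / 2 - (a + b + f) / 2 := by lia
  have hdfc : (d + f - c) / 2 = (b + d + e + f) / 2 - (b + c + e) / 2 := by lia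
  have hcfd : (c + f - d) / 2 = (a + c + e + f) / 2 - (a + d + e) / 2 := by lia
  simp only [vertexStrandProd, strandProd, vertexHalfSum, quadHalfSum, Fin.prod_univ_four,
    Fin.prod_univ_three, Matrix.cons_val, hade, hdea, haed, hbce, hceb, hbec, habf, hbfa, hafb,
    hcdf, hdfc, hcfd]
  ring

theorem strandProd_pos (ht0 : 0 < t) (ht1 : t < 1) (a b c : ℕ) : 0 < strandProd t a b c :=
  mul_pos (mul_pos (qfact_pos ht0 ht1 _) (qfact_pos ht0 ht1 _)) (qfact_pos ht0 ht1 _)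

theorem vertexStrandProd_pos (ht0 : 0 < t) (ht1 : t < 1) (a b e c d f : ℕ) :
    0 < vertexStrandProd t a b e c d f := by
  have := strandProd_pos ht0 ht1
  exact mul_pos (mul_pos (mul_pos (this _ _ _) (this _ _ _)) (this _ _ _)) (this _ _ _)

theorem edgeProd_pos (ht0 : 0 < t) (ht1 : t < 1) (a b e c d f : ℕ) :
    0 < edgeProd t a b e c d f := by
  have hpos := qfact_pos ht0 ht1
  have := hpos a; have := hpos b; have := hpos c; have := hpos d; have := hpos e; have := hpos f
  rw [edgeProd]
  positivity

theorem abs_qtheta (ht0 : 0 < t) (ht1 : t < 1) (a b c : ℕ) :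
    |qtheta t a b c| = qfact t ((a + b + c) / 2 + 1) * strandProd t a b c /
      (qfact t a * qfact t b * qfact t c) := by
  have habs n : |qfact t n| = qfact t n := abs_of_pos (qfact_pos ht0 ht1 n)
  simp only [qtheta, strandProd, abs_div, abs_mul, abs_pow, abs_neg, abs_one, one_pow, one_mul,
    habs]
  ring

theorem abs_thetaProd (ht0 : 0 < t) (ht1 : t < 1) (a b e c d f : ℕ) :
    |thetaProd t a b e c d f| = (∏ j, qfact t (vertexHalfSum a b e c d f j + 1)) *
      vertexStrandProd t a b e c d f / edgeProd t a b e c d f ^ 2 := by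
  simp only [thetaProd, abs_mul, abs_qtheta ht0 ht1, vertexStrandProd, edgeProd, vertexHalfSum,
    Fin.prod_univ_four, Matrix.cons_val, div_mul_div_comm]
  congr 1 <;> ring

theorem abs_Tet_le (ht0 : 0 < t) (ht1 : t < 1) (a b e c d f : ℕ) :
    |Tet t a b e c d f| ≤ vertexStrandProd t a b e c d f / edgeProd t a b e c d f *
      ∑ s ∈ Icc (univ.sup' univ_nonempty (vertexHalfSum a b e c d f))
          (univ.inf' univ_nonempty (quadHalfSum a b e c d f)),
        qfact t (s + 1) / ((∏ i, qfact t (quadHalfSum a b e c d f i - s)) *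
          ∏ j, qfact t (s - vertexHalfSum a b e c d f j)) := by
  have habs n : |qfact t n| = qfact t n := abs_of_pos (qfact_pos ht0 ht1 n)
  have hratio : 0 < vertexStrandProd t a b e c d f / edgeProd t a b e c d f :=
    div_pos (vertexStrandProd_pos ht0 ht1 ..) (edgeProd_pos ht0 ht1 ..)
  change |vertexStrandProd t a b e c d f / edgeProd t a b e c d f * _| ≤ _
  rw [abs_mul, abs_of_pos hratio]
  gcongr
  refine (abs_sum_le_sum_abs _ _).trans_eq (sum_congr rfl fun s _ => ?_)
  simp only [abs_div, abs_mul, abs_pow, abs_neg, abs_one, one_pow, one_mul, habs, vertexHalfSum,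
    quadHalfSum, Fin.prod_univ_four, Fin.prod_univ_three, Matrix.cons_val, mul_assoc]

theorem sixjModulus_le_sum_racahTerm (ht0 : 0 < t) (ht1 : t < 1)
    (h : TetAdmissible a b e c d f) :
    sixjModulus t a b e c d f ≤
      ∑ s ∈ Icc (univ.sup' univ_nonempty (vertexHalfSum a b e c d f))
          (univ.inf' univ_nonempty (quadHalfSum a b e c d f)),
        racahTerm (qfact t) (vertexHalfSum a b e c d f) (quadHalfSum a b e c d f) s := by
  have hZ := vertexStrandProd_pos ht0 ht1 a b e c d f
  have hQ := edgeProd_pos ht0 ht1 a b e c d f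
  have hN : 0 < ∏ j, qfact t (vertexHalfSum a b e c d f j + 1) :=
    prod_pos fun j _ => qfact_pos ht0 ht1 _
  have hTet := abs_Tet_le ht0 ht1 a b e c d f
  simp only [racahTerm, prod_div_distrib, ← mul_sum, ← h.vertexStrandProd_eq]
  rw [sixjModulus, abs_thetaProd ht0 ht1]
  set Z := vertexStrandProd t a b e c d f
  set Q := edgeProd t a b e c d f
  set N := ∏ j, qfact t (vertexHalfSum a b e c d f j + 1)
  have hnormalize : Z / Q / √(N * Z / Q ^ 2) = √(Z / N) := by
    rw [Real.sqrt_div (by positivity), Real.sqrt_sq hQ.le, Real.sqrt_mul hN.le,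
      Real.sqrt_div hZ.le]
    field_simp
    exact (Real.sq_sqrt hZ.le).symm
  rw [← hnormalize, div_mul_eq_mul_div]
  gcongr

theorem sixjModulus_le (ht0 : 0 < t) (ht1 : t < 1) (h : TetAdmissible a b e c d f) :
    sixjModulus t a b e c d f ≤ (1 - t ^ 4) / qPochInf (t ^ 4) (t ^ 4) ^ 9 *
      t ^ racahOrder (quadHalfSum a b e c d f)
        (univ.inf' univ_nonempty (quadHalfSum a b e c d f)) :=
  (sixjModulus_le_sum_racahTerm ht0 ht1 h).trans <|
    sum_racahTerm_qfact_le ht0 ht1 h.sum_vertexHalfSum (fun j => le_sup' _ (mem_univ j))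
      fun i => inf'_le _ (mem_univ i)

theorem racahOrder_inf'_of_triple_eq {B : Fin 3 → ℕ} {M p r : ℕ}
    (h : ({B 0, B 1, B 2} : Multiset ℕ) = {M, M + p, M + r}) :
    racahOrder B (univ.inf' univ_nonempty B) = 2 * (p * r) + p + r + M := by
  have hperm : [B 0, B 1, B 2].Perm [M, M + p, M + r] := Multiset.coe_eq_coe.1 h
  have hinf : univ.inf' univ_nonempty B = min (B 0) (min (B 1) (B 2)) := rfl
  have hcases : B 0 = M ∧ B 1 = M + p ∧ B 2 = M + r ∨ B 0 = M + p ∧ B 1 = M ∧ B 2 = M + r ∨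
      B 0 = M + r ∧ B 1 = M + p ∧ B 2 = M ∨ B 0 = M + p ∧ B 1 = M + r ∧ B 2 = M ∨
      B 0 = M + r ∧ B 1 = M ∧ B 2 = M + p ∨ B 0 = M ∧ B 1 = M + r ∧ B 2 = M + p := by
    simpa [List.permutations] using List.mem_permutations.2 hperm
  rcases hcases with ⟨h₀, h₁, h₂⟩ | ⟨h₀, h₁, h₂⟩ | ⟨h₀, h₁, h₂⟩ | ⟨h₀, h₁, h₂⟩ |
    ⟨h₀, h₁, h₂⟩ | ⟨h₀, h₁, h₂⟩ <;>
  · simp [hinf, racahOrder, Fin.sum_univ_three, h₀, h₁, h₂]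
    ring

theorem TetAdmissible.quadHalfSum_triple_eq (h : TetAdmissible a b e c d f) {C₁ C₂ C₃ : ℕ}
    (hC : ({C₁, C₂, C₃} : Multiset ℕ) = {a + c, b + d, e + f}) (h₂₁ : C₂ ≤ C₁) (h₃₂ : C₃ ≤ C₂) :
    ∃ M p r, C₁ = p + r + M ∧ C₁ - C₂ = 2 * p ∧ C₁ - C₃ = 2 * r ∧
      ({quadHalfSum a b e c d f 0, quadHalfSum a b e c d f 1, quadHalfSum a b e c d f 2} :
        Multiset ℕ) = {M, M + p, M + r} := by
  obtain ⟨⟨⟨A₁, h₁⟩, -⟩, ⟨⟨A₂, h₂⟩, -⟩, ⟨⟨A₃, h₃⟩, -⟩, -⟩ := h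
  have hsum : C₁ + C₂ + C₃ = (a + c) + (b + d) + (e + f) := by
    simpa [add_assoc] using congrArg Multiset.sum hC
  have hparity : ∀ C ∈ ({C₁, C₂, C₃} : Multiset ℕ), C % 2 = (a + c) % 2 := by
    rw [hC]
    simp only [Multiset.insert_eq_cons, Multiset.mem_cons, Multiset.mem_singleton]
    lia
  simp only [Multiset.insert_eq_cons, Multiset.mem_cons, Multiset.mem_singleton, forall_eq_or_imp,
    forall_eq] at hparity
  obtain ⟨p, hp⟩ : ∃ p, C₁ - C₂ = 2 * p := ⟨(C₁ - C₂) / 2, by lia⟩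
  obtain ⟨r, hr⟩ : ∃ r, C₁ - C₃ = 2 * r := ⟨(C₁ - C₃) / 2, by lia⟩
  obtain ⟨M, hM⟩ : ∃ M, C₂ + C₃ = 2 * M := ⟨(C₂ + C₃) / 2, by lia⟩
  refine ⟨M, p, r, by lia, hp, hr, ?_⟩
  -- Each `B_i` is half of what remains of `C₁ + C₂ + C₃` after removing one column sum; `B_1`
  -- omits `e + f` and `B_3` omits `a + c`, hence the reversed order.
  have hrev : ({C₁, C₂, C₃} : Multiset ℕ) = {e + f, b + d, a + c} :=
    hC.trans (Multiset.coe_eq_coe.2 (List.reverse_perm [e + f, b + d, a + c]))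
  have hmap := congrArg (Multiset.map fun C => (C₁ + C₂ + C₃ - C) / 2) hrev
  simp only [Multiset.insert_eq_cons, Multiset.map_cons, Multiset.map_singleton] at hmap
  have hM₁ : (C₁ + C₂ + C₃ - C₁) / 2 = M := by lia
  have hM₂ : (C₁ + C₂ + C₃ - C₂) / 2 = M + p := by lia
  have hM₃ : (C₁ + C₂ + C₃ - C₃) / 2 = M + r := by lia
  have hac : a + b + c + d = C₁ + C₂ + C₃ - (e + f) := by lia
  have hbd : a + c + e + f = C₁ + C₂ + C₃ - (b + d) := by lia
  have hef : b + d + e + f = C₁ + C₂ + C₃ - (a + c) := by lia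
  rw [hM₁, hM₂, hM₃, ← hac, ← hbd, ← hef] at hmap
  exact hmap.symm

theorem TetAdmissible.racahOrder_quadHalfSum (h : TetAdmissible a b e c d f) {C₁ C₂ C₃ : ℕ}
    (hC : ({C₁, C₂, C₃} : Multiset ℕ) = {a + c, b + d, e + f}) (h₂₁ : C₂ ≤ C₁) (h₃₂ : C₃ ≤ C₂) :
    racahOrder (quadHalfSum a b e c d f) (univ.inf' univ_nonempty (quadHalfSum a b e c d f)) =
      (C₁ - C₂) * (C₁ - C₃) / 2 + C₁ := by
  obtain ⟨M, p, r, hC₁, hp, hr, hquad⟩ := h.quadHalfSum_triple_eq hC h₂₁ h₃₂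
  rw [racahOrder_inf'_of_triple_eq hquad, hp, hr, mul_assoc, Nat.mul_div_cancel_left _ two_pos,
    hC₁]
  ring

end Tetrahedron

/-- The constant K(t) = (1-q)/((q;q)_∞)^9 is positive and bounds the
unitary 6j-symbol: |{a,b,e;c,d,f}_u| ≤ K(t)·t^{(C₁−C₂)(C₁−C₃)/2 + C₁}. -/
theorem stmt_4 (t : ℝ) (ht0 : 0 < t) (ht1 : t < 1) :
    0 < (1 - t ^ 4) / qPochInf (t ^ 4) (t ^ 4) ^ 9 ∧
    ∀ a b e c d f C1 C2 C3 : ℕ, TetAdmissible a b e c d f →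
      ({C1, C2, C3} : Multiset ℕ) = {a + c, b + d, e + f} →
      C2 ≤ C1 → C3 ≤ C2 →
      |sixj t a b e c d f| ≤
        (1 - t ^ 4) / qPochInf (t ^ 4) (t ^ 4) ^ 9 *
          t ^ ((C1 - C2) * (C1 - C3) / 2 + C1) := by
  have hq0 := pow_pos ht0 4
  have hq1 := pow_lt_one₀ ht0.le ht1 four_ne_zero
  refine ⟨div_pos (sub_pos.2 hq1) (pow_pos (qPochInf_pos hq0.le hq1 hq0.le hq1) 9), ?_⟩
  intro a b e c d f C1 C2 C3 h hC h21 h32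
  rw [← h.racahOrder_quadHalfSum hC h21 h32]
  exact (abs_sixj_le_sixjModulus t a b e c d f).trans (sixjModulus_le ht0 ht1 h)
end

section
/- Fix a real number t with 0 < t < 1 and set q = t^4. Let (a,b,e;c,d,f) be an admissible labeling of the edges of a tetrahedron and for m ≤ s ≤ M−1 define R(s) = t^{12s − 4(a+b+c+d+e+f) + 4} · (1 − q^{s+2}) · ∏_{i=1}^3 (1 − q^{B_i − s}) / ∏_{j=1}^4 (1 − q^{s+1−A_j}). Then R(s) is strictly decreasing in s: R(s+1) < R(s) whenever m ≤ s ≤ M−2. (R(s) is the ratio of the absolute values of the (s+1)-st and s-th terms of the alternating sum defining the tetrahedral coefficient, so the absolute values of these terms have a unique maximum.) -/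
open Filter Finset

/-!
Since `q ^ s * (1 - q ^ (B - s)) = q ^ s - q ^ B`, the power of `t` in `R(s)` can be absorbed, up
to a constant, into the factors `1 - q ^ (Bᵢ - s)`, and the new factors are positive and strictly
decreasing. The only increasing factor left is `1 - q ^ (s + 2)`. It is compensated by a single
denominator: with `n = s + 1 - A` and `s + 2 = n + k`,
`(1 - q ^ (n + k)) / (1 - q ^ n) = q ^ k + (1 - q ^ k) / (1 - q ^ n)`,
which decreases in `n`. The remaining factors `1 / (1 - q ^ (s + 1 - Aⱼ))` decrease as well.
-/

section OneSubPow

variable {K : Type*} [Field K] [LinearOrder K] [IsStrictOrderedRing K] {q : K}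

theorem one_sub_pow_pos (hq0 : 0 ≤ q) (hq1 : q < 1) {n : ℕ} (hn : n ≠ 0) : 0 < 1 - q ^ n :=
  sub_pos.2 (pow_lt_one₀ hq0 hq1 hn)

theorem one_sub_pow_succ_sub_pos (hq0 : 0 ≤ q) (hq1 : q < 1) {m n : ℕ} (hmn : m ≤ n) :
    0 < 1 - q ^ (n + 1 - m) :=
  one_sub_pow_pos hq0 hq1 (by omega)

theorem antitoneOn_inv_one_sub_pow (hq0 : 0 ≤ q) (hq1 : q < 1) :
    AntitoneOn (fun n : ℕ => (1 - q ^ n)⁻¹) (Set.Ioi 0) := fun _ hm _ _ hmn =>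
  inv_anti₀ (one_sub_pow_pos hq0 hq1 (Set.mem_Ioi.1 hm).ne')
    (sub_le_sub_left (pow_le_pow_of_le_one hq0 hq1.le hmn) 1)

theorem one_sub_pow_add_div_one_sub_pow {F : Type*} [Field F] {x : F} {n : ℕ} (hn : 1 - x ^ n ≠ 0)
    (k : ℕ) : (1 - x ^ (n + k)) / (1 - x ^ n) = x ^ k + (1 - x ^ k) * (1 - x ^ n)⁻¹ := by
  field_simp
  ring

theorem antitoneOn_one_sub_pow_add_div (hq0 : 0 ≤ q) (hq1 : q < 1) (k : ℕ) :
    AntitoneOn (fun n : ℕ => (1 - q ^ (n + k)) / (1 - q ^ n)) (Set.Ioi 0) := by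
  have hpos {n : ℕ} (hn : n ∈ Set.Ioi 0) : 0 < 1 - q ^ n :=
    one_sub_pow_pos hq0 hq1 (Set.mem_Ioi.1 hn).ne'
  intro m hm n hn hmn
  simp only [one_sub_pow_add_div_one_sub_pow (hpos hm).ne',
    one_sub_pow_add_div_one_sub_pow (hpos hn).ne']
  have hinv := antitoneOn_inv_one_sub_pow hq0 hq1 hm hn hmn
  have hk : 0 ≤ 1 - q ^ k := sub_nonneg.2 (pow_le_one₀ hq0 hq1.le)
  gcongr

end OneSubPow

section Products

variable {ι κ K : Type*} [Field K] [LinearOrder K] [IsStrictOrderedRing K] {q : K}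

theorem antitoneOn_prod_inv_one_sub_pow (hq0 : 0 ≤ q) (hq1 : q < 1) (A : ι → ℕ) (S : Finset ι) :
    AntitoneOn (fun s : ℕ => ∏ j ∈ S, (1 - q ^ (s + 1 - A j))⁻¹) {s | ∀ j ∈ S, A j ≤ s} := by
  intro s hs u hu hsu
  refine prod_le_prod
    (fun j hj => (inv_pos.2 (one_sub_pow_succ_sub_pos hq0 hq1 (hu j hj))).le) fun j hj => ?_
  have hsj := hs j hj
  exact antitoneOn_inv_one_sub_pow hq0 hq1 (Set.mem_Ioi.2 (by omega)) (Set.mem_Ioi.2 (by omega))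
    (by omega)

theorem one_sub_pow_div_prod_pos [Fintype ι] (hq0 : 0 ≤ q) (hq1 : q < 1) {A : ι → ℕ} {s : ℕ}
    (hs : ∀ j, A j ≤ s) (k : ℕ) :
    0 < (1 - q ^ (s + 1 + k)) / ∏ j, (1 - q ^ (s + 1 - A j)) :=
  div_pos (one_sub_pow_pos hq0 hq1 (by omega)) <|
    prod_pos fun j _ => one_sub_pow_succ_sub_pos hq0 hq1 (hs j)

theorem one_sub_pow_div_prod_eq_mul_prod_erase [Fintype ι] [DecidableEq ι] {F : Type*} [Field F]
    (x : F) (A : ι → ℕ) {s : ℕ} {i : ι} (hs : A i ≤ s) (k : ℕ) :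
    (1 - x ^ (s + 1 + k)) / ∏ j, (1 - x ^ (s + 1 - A j)) =
      (1 - x ^ (s + 1 - A i + (A i + k))) / (1 - x ^ (s + 1 - A i)) *
        ∏ j ∈ univ.erase i, (1 - x ^ (s + 1 - A j))⁻¹ := by
  rw [← mul_prod_erase univ _ (mem_univ i), prod_inv_distrib, ← div_eq_mul_inv, div_div,
    show s + 1 - A i + (A i + k) = s + 1 + k by omega]

theorem antitoneOn_one_sub_pow_div_prod [Fintype ι] [Nonempty ι] (hq0 : 0 ≤ q) (hq1 : q < 1)
    (A : ι → ℕ) (k : ℕ) :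
    AntitoneOn (fun s : ℕ => (1 - q ^ (s + 1 + k)) / ∏ j, (1 - q ^ (s + 1 - A j)))
      {s | ∀ j, A j ≤ s} := by
  classical
  obtain ⟨i⟩ := ‹Nonempty ι›
  intro s hs u hu hsu
  have hsi := hs i
  have hfactor : (1 - q ^ (u + 1 - A i + (A i + k))) / (1 - q ^ (u + 1 - A i)) ≤
      (1 - q ^ (s + 1 - A i + (A i + k))) / (1 - q ^ (s + 1 - A i)) :=
    antitoneOn_one_sub_pow_add_div hq0 hq1 _ (Set.mem_Ioi.2 (by omega)) (Set.mem_Ioi.2 (by omega))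
      (by omega)
  simp only [one_sub_pow_div_prod_eq_mul_prod_erase q A (hs i),
    one_sub_pow_div_prod_eq_mul_prod_erase q A (hu i)]
  exact mul_le_mul hfactor
    (antitoneOn_prod_inv_one_sub_pow hq0 hq1 A _ (fun j _ => hs j) (fun j _ => hu j) hsu)
    (prod_nonneg fun j _ => (inv_pos.2 (one_sub_pow_succ_sub_pos hq0 hq1 (hu j))).le)
    (div_pos (one_sub_pow_pos hq0 hq1 (by omega)) (one_sub_pow_succ_sub_pos hq0 hq1 hsi)).le

theorem pow_card_mul_prod_one_sub_pow_sub [Fintype κ] {R : Type*} [CommRing R] (x : R)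
    {B : κ → ℕ} {s : ℕ} (hs : ∀ i, s ≤ B i) :
    x ^ (Fintype.card κ * s) * ∏ i, (1 - x ^ (B i - s)) = ∏ i, (x ^ s - x ^ B i) := by
  rw [mul_comm (Fintype.card κ), pow_mul, Fintype.card, ← prod_const, ← prod_mul_distrib]
  exact prod_congr rfl fun i _ => by rw [mul_one_sub, ← pow_add, Nat.add_sub_cancel' (hs i)]

theorem strictAntiOn_prod_pow_sub_pow [Fintype κ] [Nonempty κ] (hq0 : 0 < q) (hq1 : q < 1)
    (B : κ → ℕ) :
    StrictAntiOn (fun s : ℕ => ∏ i, (q ^ s - q ^ B i)) {s | ∀ i, s < B i} := fun _ _ _ hu hsu =>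
  prod_lt_prod_of_nonempty
    (fun i _ => sub_pos.2 (pow_lt_pow_right_of_lt_one₀ hq0 hq1 (hu i)))
    (fun _ _ => sub_lt_sub_right (pow_lt_pow_right_of_lt_one₀ hq0 hq1 hsu) _)
    univ_nonempty

theorem strictAntiOn_pow_mul_prod_one_sub_pow_div_prod [Fintype ι] [Nonempty ι] [Fintype κ]
    [Nonempty κ] (hq0 : 0 < q) (hq1 : q < 1) {C : K} (hC : 0 < C) (A : ι → ℕ) (B : κ → ℕ) (k : ℕ) :
    StrictAntiOn
      (fun s : ℕ => C * q ^ (Fintype.card κ * s) * (1 - q ^ (s + 1 + k)) *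
        (∏ i, (1 - q ^ (B i - s))) / ∏ j, (1 - q ^ (s + 1 - A j)))
      {s | (∀ j, A j ≤ s) ∧ ∀ i, s < B i} := by
  have hratio {s : ℕ} (hs : ∀ i, s < B i) :
      C * q ^ (Fintype.card κ * s) * (1 - q ^ (s + 1 + k)) *
          (∏ i, (1 - q ^ (B i - s))) / ∏ j, (1 - q ^ (s + 1 - A j)) =
        C * ((∏ i, (q ^ s - q ^ B i)) *
          ((1 - q ^ (s + 1 + k)) / ∏ j, (1 - q ^ (s + 1 - A j)))) := by
    rw [← pow_card_mul_prod_one_sub_pow_sub q fun i => (hs i).le]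
    ring
  rintro s ⟨hAs, hsB⟩ u ⟨hAu, huB⟩ hsu
  simp only [hratio hsB, hratio huB]
  refine mul_lt_mul_of_pos_left (mul_lt_mul
    (strictAntiOn_prod_pow_sub_pow hq0 hq1 B hsB huB hsu)
    (antitoneOn_one_sub_pow_div_prod hq0.le hq1 A k hAs hAu hsu.le)
    (one_sub_pow_div_prod_pos hq0.le hq1 hAu k)
    (prod_nonneg fun i _ => ?_)) hC
  exact sub_nonneg.2 (pow_le_pow_of_le_one hq0.le hq1.le (hsB i).le)

end Products

theorem zpow_twelve_mul_sub_add {F : Type*} [Field F] {x : F} (hx : x ≠ 0) (m : ℤ) (s : ℕ) :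
    x ^ (12 * (s : ℤ) - m + 4) = x ^ (4 - m) * (x ^ 4) ^ (3 * s) := by
  rw [← pow_mul, ← zpow_natCast x, ← zpow_add₀ hx]
  push_cast
  ring_nf

theorem stmt_5_general {t : ℝ} (ht0 : 0 < t) (ht1 : t < 1) (m : ℤ) (A₁ A₂ A₃ A₄ B₁ B₂ B₃ : ℕ) :
    StrictAntiOn
      (fun s : ℕ =>
        t ^ (12 * (s : ℤ) - m + 4) * (1 - (t ^ 4) ^ (s + 2)) *
          ((1 - (t ^ 4) ^ (B₁ - s)) * (1 - (t ^ 4) ^ (B₂ - s)) * (1 - (t ^ 4) ^ (B₃ - s))) /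
          ((1 - (t ^ 4) ^ (s + 1 - A₁)) * (1 - (t ^ 4) ^ (s + 1 - A₂)) *
            (1 - (t ^ 4) ^ (s + 1 - A₃)) * (1 - (t ^ 4) ^ (s + 1 - A₄))))
      (Set.Ico (max A₁ (max A₂ (max A₃ A₄))) (min B₁ (min B₂ B₃))) := by
  have hmem {s : ℕ} (hs : s ∈ Set.Ico (max A₁ (max A₂ (max A₃ A₄))) (min B₁ (min B₂ B₃))) :
      (∀ j, ![A₁, A₂, A₃, A₄] j ≤ s) ∧ ∀ i, s < ![B₁, B₂, B₃] i := by
    simpa [Fin.forall_fin_succ] using hs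
  have hanti := strictAntiOn_pow_mul_prod_one_sub_pow_div_prod (pow_pos ht0 4)
    (pow_lt_one₀ ht0.le ht1 four_ne_zero) (zpow_pos ht0 (4 - m))
    ![A₁, A₂, A₃, A₄] ![B₁, B₂, B₃] 1
  simp only [zpow_twelve_mul_sub_add ht0.ne']
  simpa only [Fintype.card_fin, Fin.prod_univ_four, Fin.prod_univ_three, Matrix.cons_val]
    using hanti.mono fun _ => hmem

/-- The ratio R(s) of the absolute values of consecutive terms of the
alternating sum defining the tetrahedral coefficient is strictly decreasing. -/
theorem stmt_5 (t : ℝ) (ht0 : 0 < t) (ht1 : t < 1) (a b e c d f : ℕ)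
    (h : TetAdmissible a b e c d f) :
    ∀ s : ℕ,
      max ((a + d + e) / 2) (max ((b + c + e) / 2) (max ((a + b + f) / 2) ((c + d + f) / 2))) ≤ s →
      s + 2 ≤ min ((a + b + c + d) / 2) (min ((a + c + e + f) / 2) ((b + d + e + f) / 2)) →
      (fun s : ℕ =>
        t ^ (12 * (s : ℤ) - 4 * ((a : ℤ) + b + c + d + e + f) + 4) *
          (1 - (t ^ 4) ^ (s + 2)) *
          ((1 - (t ^ 4) ^ ((a + b + c + d) / 2 - s)) *
            (1 - (t ^ 4) ^ ((a + c + e + f) / 2 - s)) *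
            (1 - (t ^ 4) ^ ((b + d + e + f) / 2 - s))) /
          ((1 - (t ^ 4) ^ (s + 1 - (a + d + e) / 2)) *
            (1 - (t ^ 4) ^ (s + 1 - (b + c + e) / 2)) *
            (1 - (t ^ 4) ^ (s + 1 - (a + b + f) / 2)) *
            (1 - (t ^ 4) ^ (s + 1 - (c + d + f) / 2)))) (s + 1) <
      (fun s : ℕ =>
        t ^ (12 * (s : ℤ) - 4 * ((a : ℤ) + b + c + d + e + f) + 4) *
          (1 - (t ^ 4) ^ (s + 2)) *
          ((1 - (t ^ 4) ^ ((a + b + c + d) / 2 - s)) *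
            (1 - (t ^ 4) ^ ((a + c + e + f) / 2 - s)) *
            (1 - (t ^ 4) ^ ((b + d + e + f) / 2 - s))) /
          ((1 - (t ^ 4) ^ (s + 1 - (a + d + e) / 2)) *
            (1 - (t ^ 4) ^ (s + 1 - (b + c + e) / 2)) *
            (1 - (t ^ 4) ^ (s + 1 - (a + b + f) / 2)) *
            (1 - (t ^ 4) ^ (s + 1 - (c + d + f) / 2)))) s := by
  intro s hm hM
  exact stmt_5_general ht0 ht1 _ _ _ _ _ _ _ _ ⟨hm, Nat.lt_of_succ_lt hM⟩
    ⟨Nat.le_succ_of_le hm, hM⟩ s.lt_succ_self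
end
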